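/- Let ν ≥ 0, α > -1 and c > 0, and for k ∈ ℕ let μ_k = ∫_0^∞ x^{k+α} e^{-cx} (J_ν(x)+1) dx. Then for every integer k ≥ 1, μ_{k+1} = (1/(c²+1)) · ( c·(2(k+α)+1)·μ_k − ((k+α)² − ν²)·μ_{k−1} + Γ(k+α)·((k+α)² + (k+α) − c²ν²) / c^{k+α+2} ). -/

import Mathlib

open MeasureTheory

/-- Bessel function of the first kind of order `ν`, defined via its power series. -/
noncomputable def besselJ (ν x : ℝ) : ℝ :=
  ∑' m : ℕ, (-1 : ℝ) ^ m / (m.factorial * Real.Gamma ((m : ℝ) + ν + 1)) *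
    (x / 2) ^ (2 * (m : ℝ) + ν)

/-- The moments `μ_k = ∫_0^∞ x^{k+α} e^{-cx} (J_ν(x) + 1) dx`. -/
noncomputable def moment (ν α c : ℝ) (k : ℕ) : ℝ :=
  ∫ x in Set.Ioi (0 : ℝ), x ^ ((k : ℝ) + α) * Real.exp (-c * x) * (besselJ ν x + 1)

noncomputable def bA (ν : ℝ) (m : ℕ) : ℝ :=
  (-1 : ℝ) ^ m / (m.factorial * Real.Gamma ((m : ℝ) + ν + 1))

noncomputable def bF (ν t : ℝ) : ℝ := ∑' m : ℕ, bA ν m * t ^ m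

lemma gamma_lb (ν : ℝ) (hν : 0 ≤ ν) (m : ℕ) :
    Real.Gamma (ν + 1) ≤ Real.Gamma ((m : ℝ) + ν + 1) := by
  induction m with
  | zero => simp
  | succ n ih =>
    have hp : (0 : ℝ) < (n : ℝ) + ν + 1 := by positivity
    have h : Real.Gamma (((n + 1 : ℕ) : ℝ) + ν + 1)
        = ((n : ℝ) + ν + 1) * Real.Gamma ((n : ℝ) + ν + 1) := by
      rw [← Real.Gamma_add_one hp.ne']; congr 1; push_cast; ring
    rw [h]
    have := Real.Gamma_pos_of_pos hp
    have hn : (0 : ℝ) ≤ n := Nat.cast_nonneg n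
    nlinarith

lemma bA_bound (ν : ℝ) (hν : 0 ≤ ν) (m : ℕ) :
    |bA ν m| ≤ (Real.Gamma (ν + 1))⁻¹ * (1 / m.factorial) := by
  have h0 : 0 < Real.Gamma (ν + 1) := Real.Gamma_pos_of_pos (by linarith)
  have h1 := gamma_lb ν hν m
  have h2 : 0 < Real.Gamma ((m : ℝ) + ν + 1) := h0.trans_le h1
  have hf : (0 : ℝ) < m.factorial := by exact_mod_cast m.factorial_pos
  unfold bA
  rw [abs_div, abs_pow, abs_neg, abs_one, one_pow, abs_of_pos (mul_pos hf h2),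
    one_div, mul_inv, mul_comm, one_div]
  gcongr

lemma bA_succ (ν : ℝ) (hν : 0 ≤ ν) (m : ℕ) :
    bA ν (m + 1) * ((m : ℝ) + 1) = - bA (ν + 1) m := by
  have h2 : 0 < Real.Gamma ((m : ℝ) + ν + 2) := Real.Gamma_pos_of_pos (by positivity)
  have hf : (0 : ℝ) < m.factorial := by exact_mod_cast m.factorial_pos
  unfold bA
  rw [show (((m + 1 : ℕ) : ℝ) + ν + 1) = (m : ℝ) + ν + 2 by push_cast; ring,
    show (m : ℝ) + (ν + 1) + 1 = (m : ℝ) + ν + 2 by ring, Nat.factorial_succ]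
  push_cast
  have : (m : ℝ) + 1 ≠ 0 := by positivity
  field_simp
  ring

lemma bA_zero_rec (ν : ℝ) (hν : 0 ≤ ν) : (ν + 1) * bA (ν + 1) 0 = bA ν 0 := by
  have h2 : 0 < Real.Gamma (ν + 1) := Real.Gamma_pos_of_pos (by positivity)
  have : ν + 1 ≠ 0 := by positivity
  simp [bA, Real.Gamma_add_one this]
  field_simp

lemma bA_rec (ν : ℝ) (hν : 0 ≤ ν) (m : ℕ) :
    bA (ν + 2) m = (ν + 1) * bA (ν + 1) (m + 1) - bA ν (m + 1) := by
  have h2 : 0 < Real.Gamma ((m : ℝ) + ν + 2) := Real.Gamma_pos_of_pos (by positivity)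
  have hf : (0 : ℝ) < m.factorial := by exact_mod_cast m.factorial_pos
  have h3 : (m : ℝ) + ν + 2 ≠ 0 := by positivity
  have hG := Real.Gamma_add_one h3
  unfold bA
  rw [show (((m + 1 : ℕ) : ℝ) + ν + 1) = (m : ℝ) + ν + 2 by push_cast; ring,
    show (m : ℝ) + (ν + 2) + 1 = (m : ℝ) + ν + 2 + 1 by ring,
    show (((m + 1 : ℕ) : ℝ) + (ν + 1) + 1) = (m : ℝ) + ν + 2 + 1 by push_cast; ring,
    Nat.factorial_succ, hG]
  push_cast
  have : (m : ℝ) + 1 ≠ 0 := by positivity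
  field_simp
  ring

lemma bF_summable (ν : ℝ) (hν : 0 ≤ ν) (t : ℝ) : Summable (fun m : ℕ => bA ν m * t ^ m) := by
  refine Summable.of_norm_bounded
    (g := fun m : ℕ => (Real.Gamma (ν + 1))⁻¹ * (|t| ^ m / m.factorial))
    ((Real.summable_pow_div_factorial |t|).mul_left _) (fun m => ?_)
  rw [Real.norm_eq_abs, abs_mul, abs_pow]
  calc _ ≤ (Real.Gamma (ν + 1))⁻¹ * (1 / m.factorial) * |t| ^ m := by
        gcongr; exact bA_bound ν hν m
    _ = _ := by ring

lemma bF_rec (ν : ℝ) (hν : 0 ≤ ν) (t : ℝ) :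
    t * bF (ν + 2) t = (ν + 1) * bF (ν + 1) t - bF ν t := by
  unfold bF
  rw [(bF_summable (ν + 1) (by linarith) t).tsum_eq_zero_add,
    (bF_summable ν hν t).tsum_eq_zero_add, mul_add, ← tsum_mul_left, ← tsum_mul_left]
  have s1 := ((summable_nat_add_iff 1).2 (bF_summable (ν + 1) (by linarith) t)).mul_left (ν + 1)
  have s2 := (summable_nat_add_iff 1).2 (bF_summable ν hν t)
  have e : ∑' m : ℕ, t * (bA (ν + 2) m * t ^ m) =
      ∑' m : ℕ, ((ν + 1) * (bA (ν + 1) (m + 1) * t ^ (m + 1)) - bA ν (m + 1) * t ^ (m + 1)) := by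
    congr 1; ext m; rw [bA_rec ν hν]; ring
  rw [e, s1.tsum_sub s2]
  have := bA_zero_rec ν hν
  simp only [pow_zero, mul_one]
  linarith

lemma bF_deriv (ν : ℝ) (hν : 0 ≤ ν) (t : ℝ) : HasDerivAt (bF ν) (- bF (ν + 1) t) t := by
  set R : ℝ := |t| + 1 with hR
  have hR0 : 0 ≤ R := by positivity
  have ht : t ∈ Metric.ball (0 : ℝ) R := by simp [hR]
  have hu : Summable (fun m : ℕ =>
      (Real.Gamma (ν + 1))⁻¹ * (1 / m.factorial) * (m * R ^ (m - 1))) := by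
    rw [← summable_nat_add_iff 1]
    refine ((Real.summable_pow_div_factorial R).mul_left (Real.Gamma (ν + 1))⁻¹).congr
      (fun m => ?_)
    rw [Nat.factorial_succ, Nat.add_sub_cancel]
    push_cast
    have : (m : ℝ) + 1 ≠ 0 := by positivity
    field_simp
  have h := hasDerivAt_tsum_of_isPreconnected (g := fun (m : ℕ) (y : ℝ) => bA ν m * y ^ m)
    (g' := fun (m : ℕ) (y : ℝ) => bA ν m * (m * y ^ (m - 1))) hu Metric.isOpen_ball
    (convex_ball (0 : ℝ) R).isPreconnected
    (fun m y _ => (hasDerivAt_pow m y).const_mul _)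
    (fun m y hy => by
      have hy' : |y| ≤ R := by simpa using (mem_ball_zero_iff.1 hy).le
      rw [Real.norm_eq_abs, abs_mul, abs_mul, abs_pow, Nat.abs_cast]
      gcongr
      exact bA_bound ν hν m) ht (bF_summable ν hν t) ht
  have e : ∑' m : ℕ, bA ν m * (m * t ^ (m - 1)) = - bF (ν + 1) t := by
    have hs : Summable (fun m : ℕ => bA ν m * (m * t ^ (m - 1))) := by
      rw [← summable_nat_add_iff 1]
      refine (bF_summable (ν + 1) (by linarith) t).neg.congr (fun m => ?_)
      rw [Nat.add_sub_cancel, ← mul_assoc, Nat.cast_succ, bA_succ ν hν]; ring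
    rw [hs.tsum_eq_zero_add, bF, ← tsum_neg]
    simp only [Nat.cast_zero, zero_mul, mul_zero, zero_add]
    congr 1; ext m
    rw [Nat.add_sub_cancel, ← mul_assoc, Nat.cast_succ, bA_succ ν hν]; ring
  rw [e] at h
  exact h

lemma bF_bdd (ν : ℝ) (hν : 0 ≤ ν) : ∃ C, ∀ t, 0 ≤ t → |bF ν t| ≤ C := by
  have hd : ∀ t, HasDerivAt (fun t => bF ν t ^ 2 + t * bF (ν + 1) t ^ 2)
      (-(2 * ν + 1) * bF (ν + 1) t ^ 2) t := by
    intro t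
    have h1 := bF_deriv ν hν t
    have h2 := bF_deriv (ν + 1) (by linarith) t
    have h := (h1.pow 2).add ((hasDerivAt_id t).mul (h2.pow 2))
    refine h.congr_deriv ?_
    have := bF_rec ν hν t
    rw [show ν + 1 + 1 = ν + 2 by ring]
    simp only [Pi.pow_apply, id]
    norm_num
    linear_combination (-2 * bF (ν + 1) t) * this
  have ha : Antitone (fun t => bF ν t ^ 2 + t * bF (ν + 1) t ^ 2) :=
    antitone_of_deriv_nonpos (fun t => (hd t).differentiableAt) (fun t => by
      rw [(hd t).deriv]
      nlinarith [sq_nonneg (bF (ν + 1) t)])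
  refine ⟨|bF ν 0|, fun t ht => ?_⟩
  have h := ha ht
  simp only [zero_mul, add_zero] at h
  apply sq_le_sq.1
  nlinarith [sq_nonneg (bF (ν + 1) t)]

lemma bF_cont (ν : ℝ) (hν : 0 ≤ ν) : Continuous (bF ν) :=
  continuous_iff_continuousAt.2 (fun t => (bF_deriv ν hν t).continuousAt)

lemma base_int (c p : ℝ) (hc : 0 < c) (hp : -1 < p) :
    IntegrableOn (fun x : ℝ => x ^ p * Real.exp (-c * x)) (Set.Ioi 0) := by
  have := integrableOn_rpow_mul_exp_neg_mul_rpow (p := 1) hp one_pos hc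
  simpa using this

noncomputable def bI (c ν p : ℝ) : ℝ :=
  ∫ x in Set.Ioi (0 : ℝ), x ^ p * Real.exp (-c * x) * bF ν (x ^ 2 / 4)

lemma bI_int (c ν p : ℝ) (hc : 0 < c) (hν : 0 ≤ ν) (hp : -1 < p) :
    IntegrableOn (fun x : ℝ => x ^ p * Real.exp (-c * x) * bF ν (x ^ 2 / 4)) (Set.Ioi 0) := by
  obtain ⟨C, hC⟩ := bF_bdd ν hν
  refine Integrable.mul_bdd (c := C) (base_int c p hc hp) ?_ ?_
  · exact ((bF_cont ν hν).comp (by fun_prop)).aestronglyMeasurable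
  · exact Filter.Eventually.of_forall (fun x => hC _ (by positivity))

lemma ibp (c ν p : ℝ) (hc : 0 < c) (hν : 0 ≤ ν) (hp : 0 < p) :
    p * bI c ν (p - 1) - c * bI c ν p - 1 / 2 * bI c (ν + 1) (p + 1) = 0 := by
  obtain ⟨C, hC⟩ := bF_bdd ν hν
  have i1 := bI_int c ν (p - 1) hc hν (by linarith)
  have i2 := bI_int c ν p hc hν (by linarith)
  have i3 := bI_int c (ν + 1) (p + 1) hc (by linarith) (by linarith)
  have h := integral_Ioi_of_hasDerivAt_of_tendsto
    (f := fun x : ℝ => x ^ p * Real.exp (-c * x) * bF ν (x ^ 2 / 4))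
    (f' := fun x : ℝ => p * (x ^ (p - 1) * Real.exp (-c * x) * bF ν (x ^ 2 / 4))
      - c * (x ^ p * Real.exp (-c * x) * bF ν (x ^ 2 / 4))
      - 1 / 2 * (x ^ (p + 1) * Real.exp (-c * x) * bF (ν + 1) (x ^ 2 / 4)))
    (a := 0) (m := 0) ?_ ?_ ?_ ?_
  · rw [integral_sub, integral_sub, integral_const_mul, integral_const_mul,
      integral_const_mul] at h
    · simpa [bI, Real.zero_rpow hp.ne'] using h
    · exact i1.const_mul _
    · exact i2.const_mul _
    · exact (i1.const_mul _).sub (i2.const_mul _)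
    · exact i3.const_mul _
  · apply ContinuousAt.continuousWithinAt
    exact ((Real.continuousAt_rpow_const 0 p (Or.inr hp.le)).mul (by fun_prop)).mul
      ((bF_cont ν hν).comp (by fun_prop)).continuousAt
  · intro x hx
    have hx : (0 : ℝ) < x := hx
    have d1 := Real.hasDerivAt_rpow_const (x := x) (p := p) (Or.inl hx.ne')
    have d2 : HasDerivAt (fun x : ℝ => Real.exp (-c * x)) (Real.exp (-c * x) * (-c * 1)) x :=
      ((hasDerivAt_id x).const_mul (-c)).exp
    have d3 : HasDerivAt (fun x : ℝ => bF ν (x ^ 2 / 4))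
        (- bF (ν + 1) (x ^ 2 / 4) * ((2 : ℕ) * x ^ (2 - 1) / 4)) x :=
      HasDerivAt.comp (h₂ := bF ν) (h := fun x : ℝ => x ^ 2 / 4) x (bF_deriv ν hν (x ^ 2 / 4)) ((hasDerivAt_pow 2 x).div_const 4)
    refine ((d1.mul d2).mul d3).congr_deriv ?_
    rw [Real.rpow_add_one hx.ne']
    push_cast
    simp only [Pi.mul_apply]
    ring
  · exact ((i1.const_mul _).sub (i2.const_mul _)).sub (i3.const_mul _)
  · have t0 := (tendsto_rpow_mul_exp_neg_mul_atTop_nhds_zero p c hc).mul_const C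
    rw [zero_mul] at t0
    refine squeeze_zero_norm' ?_ t0
    filter_upwards [Filter.eventually_ge_atTop 0] with x hx
    rw [Real.norm_eq_abs, abs_mul, abs_of_nonneg (by positivity : 0 ≤ x ^ p * Real.exp (-c * x))]
    gcongr
    exact hC _ (by positivity)

lemma bI_rec (c ν p : ℝ) (hc : 0 < c) (hν : 0 ≤ ν) (hp : -1 < p) :
    1 / 4 * bI c (ν + 2) (p + 2) = (ν + 1) * bI c (ν + 1) p - bI c ν p := by
  unfold bI
  rw [← integral_const_mul, ← integral_const_mul, ← integral_sub]
  · refine setIntegral_congr_fun measurableSet_Ioi (fun x hx => ?_)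
    have hx : (0 : ℝ) < x := hx
    have := bF_rec ν hν (x ^ 2 / 4)
    rw [Real.rpow_add hx, Real.rpow_two]
    linear_combination (x ^ p * Real.exp (-c * x)) * this
  · exact (bI_int c (ν + 1) p hc (by linarith) hp).const_mul _
  · exact bI_int c ν p hc hν hp

lemma besselJ_eq (ν x : ℝ) (hx : 0 < x) :
    besselJ ν x = (1 / 2) ^ ν * x ^ ν * bF ν (x ^ 2 / 4) := by
  unfold besselJ bF
  rw [← tsum_mul_left]
  congr 1; ext m
  rw [Real.rpow_add (by positivity), mul_comm (2 : ℝ), mul_comm (m : ℝ), Real.rpow_mul (by positivity), Real.rpow_two,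
    Real.rpow_natCast, ← Real.mul_rpow (by norm_num) hx.le,
    show (1 / 2 * x) = x / 2 by ring, show (x / 2) ^ 2 = x ^ 2 / 4 by ring]
  unfold bA
  ring

lemma moment_eq (ν α c : ℝ) (hν : 0 ≤ ν) (hc : 0 < c) (k : ℕ) (hk : -1 < (k : ℝ) + α) :
    moment ν α c k = (1 / 2) ^ ν * bI c ν (k + α + ν)
      + Real.Gamma (k + α + 1) / c ^ ((k : ℝ) + α + 1) := by
  have hg := Real.integral_rpow_mul_exp_neg_mul_Ioi (a := (k : ℝ) + α + 1) (r := c)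
    (by linarith) hc
  have : Real.Gamma (k + α + 1) / c ^ ((k : ℝ) + α + 1)
      = ∫ x in Set.Ioi (0 : ℝ), x ^ ((k : ℝ) + α) * Real.exp (-c * x) := by
    rw [add_sub_cancel_right] at hg
    simp only [neg_mul]
    rw [hg, Real.div_rpow zero_le_one hc.le, Real.one_rpow]; ring
  rw [this, moment, bI, ← integral_const_mul, ← integral_add]
  · refine setIntegral_congr_fun measurableSet_Ioi (fun x hx => ?_)
    have hx : (0 : ℝ) < x := hx
    rw [besselJ_eq ν x hx, Real.rpow_add hx _ ν]
    ring
  · exact (bI_int c ν _ hc hν (by linarith)).const_mul _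
  · exact base_int c _ hc hk

theorem moment_recurrence (ν α c : ℝ) (hν : 0 ≤ ν) (hα : -1 < α) (hc : 0 < c)
    (k : ℕ) (hk : 1 ≤ k) :
    moment ν α c (k + 1) =
      (1 / (c ^ 2 + 1)) *
        (c * (2 * ((k : ℝ) + α) + 1) * moment ν α c k -
          (((k : ℝ) + α) ^ 2 - ν ^ 2) * moment ν α c (k - 1) +
          Real.Gamma ((k : ℝ) + α) * (((k : ℝ) + α) ^ 2 + ((k : ℝ) + α) - c ^ 2 * ν ^ 2) /
            c ^ ((k : ℝ) + α + 2)) := by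
  have hk1 : (1 : ℝ) ≤ k := by exact_mod_cast hk
  have hkm : ((k - 1 : ℕ) : ℝ) = k - 1 := by push_cast [hk]; ring
  rw [moment_eq ν α c hν hc (k + 1) (by push_cast; linarith),
    moment_eq ν α c hν hc k (by linarith),
    moment_eq ν α c hν hc (k - 1) (by rw [hkm]; linarith), hkm]
  push_cast
  obtain ⟨s, hs⟩ : ∃ s : ℝ, s = k + α := ⟨_, rfl⟩
  have hs0 : 0 < s := by linarith
  rw [show (k : ℝ) + 1 + α = s + 1 by rw [hs]; ring, show (k : ℝ) - 1 + α = s - 1 by rw [hs]; ring,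
    ← hs, sub_add_cancel, Real.Gamma_add_one (by positivity : s + 1 ≠ 0),
    Real.Gamma_add_one hs0.ne', show s + 1 + 1 = s + 2 by ring, Real.rpow_add hc s 2,
    Real.rpow_add hc s 1, Real.rpow_two, Real.rpow_one]
  have a1 := ibp c ν (s + ν) hc hν (by linarith)
  have a2 := ibp c ν (s + ν + 1) hc hν (by linarith)
  have b1 := ibp c (ν + 1) (s + ν + 2) hc (by linarith) (by linarith)
  have r1 := bI_rec c ν (s + ν + 1) hc hν (by linarith)
  rw [show ν + 1 + 1 = ν + 2 by ring, show s + ν + 2 - 1 = s + ν + 1 by ring,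
    show s + ν + 2 + 1 = s + ν + 1 + 2 by ring] at b1
  rw [show s + ν + 1 - 1 = s + ν by ring, show s + ν + 1 + 1 = s + ν + 2 by ring] at a2
  rw [show s + 1 + ν = s + ν + 1 by ring, show s - 1 + ν = s + ν - 1 by ring]
  have key : (c ^ 2 + 1) * bI c ν (s + ν + 1) = c * (2 * s + 1) * bI c ν (s + ν)
      - (s ^ 2 - ν ^ 2) * bI c ν (s + ν - 1) := by
    linear_combination (s - ν) * a1 - c * a2 + (1 / 2) * b1 + r1
  have hcs : c ^ s ≠ 0 := (Real.rpow_pos_of_pos hc s).ne'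
  have hc2 : c ^ 2 + 1 ≠ 0 := by positivity
  rw [one_div_mul_eq_div, eq_div_iff hc2]
  have hg : (c ^ 2 + 1) * ((s + 1) * (s * Real.Gamma s) / (c ^ s * c ^ 2)) =
      c * (2 * s + 1) * (s * Real.Gamma s / (c ^ s * c)) - (s ^ 2 - ν ^ 2) * (Real.Gamma s / c ^ s)
      + Real.Gamma s * (s ^ 2 + s - c ^ 2 * ν ^ 2) / (c ^ s * c ^ 2) := by
    field_simp
    ring
  linear_combination (1 / 2) ^ ν * key + hg
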